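/- arXiv:1206.0017 — 2 statements merged into one kernel-verified Lean document; each statement's English description precedes it below -/
import Mathlib

section
/- Let E and F be Banach spaces, (G₀,G₁) a Banach couple, ρ a function parameter of class ℬ^{+−}, and G a Banach space of class J_ρ(G₀,G₁). Let T be a bounded bilinear operator from E×F into G₀+G₁ such that T(E×F) ⊂ G₀∩G₁, T is compact as a bilinear map from E×F into G₀, and T is bounded from E×F into G₁. Then T is compact from E×F into G. -/
open Filter Set MeasureTheory ENNReal NNReal

noncomputable section

/-! ### Function parameters -/

/-- `rbar ρ s = sup_{t>0} ρ(s t)/ρ(t)`. -/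
def rbar (ρ : ℝ → ℝ) (s : ℝ) : ℝ := sSup {r : ℝ | ∃ t > 0, r = ρ (s * t) / ρ t}

/-- The class `ℬ` of function parameters. -/
structure IsClassB (ρ : ℝ → ℝ) : Prop where
  pos : ∀ t > 0, 0 < ρ t
  cont : ContinuousOn ρ (Set.Ioi 0)
  one : ρ 1 = 1
  bdd : ∀ s > 0, BddAbove {r : ℝ | ∃ t > 0, r = ρ (s * t) / ρ t}

/-- The class `ℬ^{+-}` of function parameters. -/
structure IsClassBpm (ρ : ℝ → ℝ) extends IsClassB ρ : Prop where
  integ : MeasureTheory.IntegrableOn (fun t => min 1 t⁻¹ * rbar ρ t * t⁻¹) (Set.Ioi 0)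

/-- Pseudo-concavity of a function parameter. -/
def IsPseudoConcave (ρ : ℝ → ℝ) : Prop :=
  ∃ C > 0, ∀ s > 0, ∀ t > 0, ρ t ≤ C * max 1 (t / s) * ρ s

/-! ### `ℓ^q` norms of two-sided sequences with values in `ℝ≥0∞` -/

/-- The `ℓ^q(ℤ)` norm of a sequence of extended reals. -/
def eLq (q : ℝ≥0∞) (a : ℤ → ℝ≥0∞) : ℝ≥0∞ :=
  if q = ∞ then ⨆ n, a n else (∑' n, a n ^ q.toReal) ^ (1 / q.toReal)

/-! ### Extended-real-valued norms -/

/-- `N : V → ℝ≥0∞` is a complete (Banach) extended norm; its finiteness set is the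
underlying Banach space. -/
structure IsENorm {V : Type*} [AddCommGroup V] [Module ℝ V] (N : V → ℝ≥0∞) : Prop where
  map_zero : N 0 = 0
  eq_zero : ∀ x, N x = 0 → x = 0
  add_le : ∀ x y, N (x + y) ≤ N x + N y
  smul : ∀ (c : ℝ) (x : V), N (c • x) = ENNReal.ofReal |c| * N x
  complete : ∀ u : ℕ → V, (∀ n, N (u n) ≠ ∞) →
    (∀ ε : ℝ, 0 < ε → ∃ n₀ : ℕ, ∀ m ≥ n₀, ∀ n ≥ n₀, N (u m - u n) < ENNReal.ofReal ε) →
    ∃ x, N x ≠ ∞ ∧ Filter.Tendsto (fun n => N (u n - x)) Filter.atTop (nhds 0)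

/-! ### Banach couples realized inside an ambient space -/

section Couple

variable {E₀ E₁ V : Type*} [NormedAddCommGroup E₀] [NormedSpace ℝ E₀]
  [NormedAddCommGroup E₁] [NormedSpace ℝ E₁] [AddCommGroup V] [Module ℝ V]

/-- The extended norm on the ambient space induced by the embedding of one Banach space:
`∞` outside the range of the embedding. -/
def enormOf {E : Type*} [NormedAddCommGroup E] [NormedSpace ℝ E] (i : E →ₗ[ℝ] V) (x : V) : ℝ≥0∞ :=
  ⨅ (a : E) (_ : i a = x), (‖a‖₊ : ℝ≥0∞)

/-- The `K`-functional of the couple `(E₀, E₁)`. -/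
def eKfun (i₀ : E₀ →ₗ[ℝ] V) (i₁ : E₁ →ₗ[ℝ] V) (t : ℝ) (x : V) : ℝ≥0∞ :=
  ⨅ (a : E₀) (b : E₁) (_ : x = i₀ a + i₁ b), ENNReal.ofReal (‖a‖ + t * ‖b‖)

/-- The extended norm of `E₀ + E₁`. -/
def esumNorm (i₀ : E₀ →ₗ[ℝ] V) (i₁ : E₁ →ₗ[ℝ] V) (x : V) : ℝ≥0∞ := eKfun i₀ i₁ 1 x

/-- The extended norm of `E₀ ∩ E₁`. -/
def einterNorm (i₀ : E₀ →ₗ[ℝ] V) (i₁ : E₁ →ₗ[ℝ] V) (x : V) : ℝ≥0∞ :=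
  max (enormOf i₀ x) (enormOf i₁ x)

/-- The extended norm of the interpolation space `(E₀,E₁)_{ρ,q;K}`. -/
def eKNorm (i₀ : E₀ →ₗ[ℝ] V) (i₁ : E₁ →ₗ[ℝ] V) (ρ : ℝ → ℝ) (q : ℝ≥0∞) (x : V) : ℝ≥0∞ :=
  eLq q (fun n => eKfun i₀ i₁ ((2 : ℝ) ^ n) x / ENNReal.ofReal (ρ ((2 : ℝ) ^ n)))

/-- `(a, b)` is a `J`-representation of `x`: `u_n = a n = b n ∈ E₀ ∩ E₁` and
`x = ∑_{n ∈ ℤ} u_n` with convergence in `E₀ + E₁`. -/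
def IsJRep (i₀ : E₀ →ₗ[ℝ] V) (i₁ : E₁ →ₗ[ℝ] V) (x : V) (a : ℤ → E₀) (b : ℤ → E₁) : Prop :=
  (∀ n, i₀ (a n) = i₁ (b n)) ∧
  ∀ ε : ℝ, 0 < ε → ∃ F : Finset ℤ, ∀ G : Finset ℤ, F ⊆ G →
    esumNorm i₀ i₁ (x - ∑ n ∈ G, i₀ (a n)) < ENNReal.ofReal ε

/-- The extended norm of the interpolation space `(E₀,E₁)_{ρ,q;J}`. -/
def eJNorm (i₀ : E₀ →ₗ[ℝ] V) (i₁ : E₁ →ₗ[ℝ] V) (ρ : ℝ → ℝ) (q : ℝ≥0∞) (x : V) : ℝ≥0∞ :=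
  ⨅ (a : ℤ → E₀) (b : ℤ → E₁) (_ : IsJRep i₀ i₁ x a b),
    eLq q (fun n => ENNReal.ofReal (max ‖a n‖ ((2 : ℝ) ^ n * ‖b n‖) / ρ ((2 : ℝ) ^ n)))

/-- `(E₀, E₁)` is a Banach couple: both spaces are complete and continuously embedded
in the Hausdorff topological vector space `V`. -/
structure IsBanachCouple [TopologicalSpace V] (i₀ : E₀ →ₗ[ℝ] V) (i₁ : E₁ →ₗ[ℝ] V) : Prop where
  t2 : T2Space V
  contAdd : ContinuousAdd V
  contSMul : ContinuousSMul ℝ V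
  complete₀ : CompleteSpace E₀
  complete₁ : CompleteSpace E₁
  inj₀ : Function.Injective i₀
  inj₁ : Function.Injective i₁
  cont₀ : Continuous i₀
  cont₁ : Continuous i₁

/-- `N` is (the extended norm of) an intermediate space for the couple `(E₀, E₁)`. -/
def IsIntermediate (i₀ : E₀ →ₗ[ℝ] V) (i₁ : E₁ →ₗ[ℝ] V) (N : V → ℝ≥0∞) : Prop :=
  IsENorm N ∧
  (∃ C > 0, ∀ x : V, N x ≤ ENNReal.ofReal C * einterNorm i₀ i₁ x) ∧
  (∃ C > 0, ∀ x : V, esumNorm i₀ i₁ x ≤ ENNReal.ofReal C * N x)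

/-- `N` is an intermediate space of class `J_ρ(E₀,E₁)`, i.e. `(E₀,E₁)_{ρ,1;J} ↪ N`. -/
def IsClassJ (i₀ : E₀ →ₗ[ℝ] V) (i₁ : E₁ →ₗ[ℝ] V) (ρ : ℝ → ℝ) (N : V → ℝ≥0∞) : Prop :=
  IsIntermediate i₀ i₁ N ∧ ∃ C > 0, ∀ x : V, N x ≤ ENNReal.ofReal C * eJNorm i₀ i₁ ρ 1 x

/-- `N` is an intermediate space of class `K_ρ(E₀,E₁)`, i.e. `N ↪ (E₀,E₁)_{ρ,∞;K}`. -/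
def IsClassK (i₀ : E₀ →ₗ[ℝ] V) (i₁ : E₁ →ₗ[ℝ] V) (ρ : ℝ → ℝ) (N : V → ℝ≥0∞) : Prop :=
  IsIntermediate i₀ i₁ N ∧ ∃ C > 0, ∀ x : V, eKNorm i₀ i₁ ρ ⊤ x ≤ ENNReal.ofReal C * N x

end Couple

/-! ### The approximation hypothesis (AP) -/

/-- The couple with extended norms `N₀, N₁` satisfies the approximation hypothesis (AP). -/
def SatisfiesAP {V : Type*} [AddCommGroup V] [Module ℝ V] (N₀ N₁ : V → ℝ≥0∞) : Prop :=
  ∃ (P Pp Pm : ℕ → V →ₗ[ℝ] V) (C : ℝ≥0∞) (c : ℕ → ℝ≥0∞),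
    0 < C ∧ C ≠ ∞ ∧ Filter.Tendsto c Filter.atTop (nhds 0) ∧
    (∀ (n : ℕ) (x y : V), N₀ x ≠ ∞ → N₁ y ≠ ∞ →
      (P n (x + y) + Pp n (x + y) + Pm n (x + y) = x + y ∧
        N₀ (P n (x + y)) ≠ ∞ ∧ N₁ (P n (x + y)) ≠ ∞)) ∧
    (∀ n x, N₀ (P n x) ≤ C * N₀ x) ∧ (∀ n x, N₁ (P n x) ≤ C * N₁ x) ∧
    (∀ n x, N₀ (Pp n x) ≤ C * N₀ x) ∧ (∀ n x, N₁ (Pp n x) ≤ C * N₁ x) ∧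
    (∀ n x, N₀ (Pm n x) ≤ C * N₀ x) ∧ (∀ n x, N₁ (Pm n x) ≤ C * N₁ x) ∧
    (∀ n x, N₀ x ≠ ∞ → N₁ (Pp n x) ≤ c n * N₀ x) ∧
    (∀ n x, N₁ x ≠ ∞ → N₀ (Pm n x) ≤ c n * N₁ x)

/-! ### Bilinear operators -/

section Bilinear

variable {VE VF VG : Type*} [AddCommGroup VG]

/-- The norm of a bilinear operator between spaces given by extended norms. -/
def eBilNorm (NE : VE → ℝ≥0∞) (NF : VF → ℝ≥0∞) (NG : VG → ℝ≥0∞) (T : VE → VF → VG) : ℝ≥0∞ :=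
  ⨆ (x : VE) (_ : NE x ≤ 1) (y : VF) (_ : NF y ≤ 1), NG (T x y)

/-- Boundedness of a bilinear operator between spaces given by extended norms. -/
def eBilBdd (NE : VE → ℝ≥0∞) (NF : VF → ℝ≥0∞) (NG : VG → ℝ≥0∞) (T : VE → VF → VG) : Prop :=
  ∃ M : ℝ≥0, ∀ x y, NG (T x y) ≤ (M : ℝ≥0∞) * NE x * NF y

/-- Compactness of a bilinear operator: the image of the product of unit balls is
totally bounded in the target. -/
def eBilCompact (NE : VE → ℝ≥0∞) (NF : VF → ℝ≥0∞) (NG : VG → ℝ≥0∞) (T : VE → VF → VG) : Prop :=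
  ∀ ε : ℝ, 0 < ε → ∃ D : Finset VG, ∀ x y, NE x ≤ 1 → NF y ≤ 1 →
    ∃ c ∈ D, NG (T x y - c) < ENNReal.ofReal ε

end Bilinear

/-! ### A generic K-functional for a couple given by two extended norms -/

/-- Generic `K`-functional for a couple described by two extended norms on `W`. -/
def eKgen {W : Type*} [AddCommGroup W] (N₀ N₁ : W → ℝ≥0∞) (t : ℝ) (x : W) : ℝ≥0∞ :=
  ⨅ y : W, (N₀ (x - y) + ENNReal.ofReal t * N₁ y)

/-- The `(ρ,q;K)`-interpolation extended norm for a couple given by two extended norms. -/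
def eKNormGen {W : Type*} [AddCommGroup W] (N₀ N₁ : W → ℝ≥0∞) (ρ : ℝ → ℝ) (q : ℝ≥0∞)
    (x : W) : ℝ≥0∞ :=
  eLq q (fun n => eKgen N₀ N₁ ((2 : ℝ) ^ n) x / ENNReal.ofReal (ρ ((2 : ℝ) ^ n)))

/-! ### Lions and Persson approximation conditions -/

section LP

variable {E₀ E₁ V : Type*} [NormedAddCommGroup E₀] [NormedSpace ℝ E₀]
  [NormedAddCommGroup E₁] [NormedSpace ℝ E₁] [AddCommGroup V] [Module ℝ V]

/-- Lions' approximation condition for the couple `(E₀, E₁)`. -/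
def LionsCondition (i₀ : E₀ →ₗ[ℝ] V) (i₁ : E₁ →ₗ[ℝ] V) : Prop :=
  ∃ P : ℕ → V →ₗ[ℝ] V,
    (∀ (n : ℕ) (a : E₀), einterNorm i₀ i₁ (P n (i₀ a)) ≠ ∞) ∧
    (∀ (n : ℕ) (b : E₁), einterNorm i₀ i₁ (P n (i₁ b)) ≠ ∞) ∧
    (∀ a : E₀, Filter.Tendsto (fun n => enormOf i₀ (P n (i₀ a) - i₀ a)) Filter.atTop (nhds 0)) ∧
    (∀ b : E₁, Filter.Tendsto (fun n => enormOf i₁ (P n (i₁ b) - i₁ b)) Filter.atTop (nhds 0))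

/-- Persson's approximation condition for the couple `(E₀, E₁)`. -/
def PerssonCondition (i₀ : E₀ →ₗ[ℝ] V) (i₁ : E₁ →ₗ[ℝ] V) : Prop :=
  ∀ K : Set E₀, IsCompact K →
    ∃ (C : ℝ) (P : Set (V →ₗ[ℝ] V)), 0 < C ∧
      (∀ p ∈ P,
        (∀ a : E₀, einterNorm i₀ i₁ (p (i₀ a)) ≠ ∞ ∧
          enormOf i₀ (p (i₀ a)) ≤ ENNReal.ofReal (C * ‖a‖)) ∧
        (∀ b : E₁, einterNorm i₀ i₁ (p (i₁ b)) ≠ ∞ ∧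
          enormOf i₁ (p (i₁ b)) ≤ ENNReal.ofReal (C * ‖b‖))) ∧
      (∀ ε > 0, ∃ p ∈ P, ∀ x ∈ K, enormOf i₀ (p (i₀ x) - i₀ x) < ENNReal.ofReal ε)

end LP

end

/-!
On a set bounded in `G₁`, convergence in `G₀` forces convergence in `(G₀, G₁)_{ρ,q;J}`: putting `x`
in the single slot `n` of a `J`-representation gives `‖x‖ ≤ max (‖x‖₀, 2ⁿ‖x‖₁) / ρ(2ⁿ)`, where
`2ⁿ / ρ(2ⁿ)` can be made as small as desired, and then `‖x‖₀` is taken small compared with `ρ(2ⁿ)`.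
Hence a finite net for the `G₀`-norm whose points lie in the set itself is a finite net for `G`.

That `2ⁿ / ρ(2ⁿ)` gets arbitrarily small comes from `ρ̄`: if `1 ≤ 2ⁿ s ≤ 2`, then `ρ(2ⁿ s)` is
bounded below, so `2ⁿ / ρ(2ⁿ)` is at most a constant times `ρ̄(s) / s`, and `ρ̄(s) / s` cannot stay
away from zero because `∫₁^∞ ρ̄(s) / s ds / s` is finite.
-/

section FunctionParameter

variable {ρ : ℝ → ℝ}

lemma IsClassB.div_le_rbar (hρ : IsClassB ρ) {s t : ℝ} (hs : 0 < s) (ht : 0 < t) :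
    ρ (s * t) / ρ t ≤ rbar ρ s :=
  le_csSup (hρ.bdd s hs) ⟨t, ht, rfl⟩

lemma IsClassB.exists_zpow_div_le_rbar_div (hρ : IsClassB ρ) :
    ∃ c > 0, ∀ s > 0, ∃ n : ℤ, (2 : ℝ) ^ n / ρ (2 ^ n) ≤ c * (rbar ρ s / s) := by
  obtain ⟨κ, hκ, hκ_le⟩ : ∃ κ > 0, ∀ u ∈ Icc (1 : ℝ) 2, κ ≤ ρ u :=
    isCompact_Icc.exists_forall_le' (hρ.cont.mono fun u hu ↦ one_pos.trans_le hu.1)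
      fun u hu ↦ hρ.pos u (one_pos.trans_le hu.1)
  refine ⟨2 / κ, by positivity, fun s hs ↦ ?_⟩
  obtain ⟨m, hms, hsm⟩ := exists_mem_Ico_zpow hs one_lt_two
  have h2m : (0 : ℝ) < 2 ^ m := by positivity
  refine ⟨-m, ?_⟩
  rw [zpow_add_one₀ two_ne_zero] at hsm
  rw [zpow_neg]
  set t : ℝ := (2 ^ m)⁻¹
  have ht : 0 < t := by positivity
  have hst : s * t ∈ Icc (1 : ℝ) 2 := by
    constructor
    · rwa [← div_eq_mul_inv, one_le_div h2m]
    · rw [← div_eq_mul_inv, div_le_iff₀ h2m]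
      linarith
  have hρt : 0 < ρ t := hρ.pos t ht
  calc t / ρ t ≤ 2 / s / ρ t := by
        gcongr
        rw [le_div_iff₀ hs, mul_comm]
        exact hst.2
    _ = 2 / κ * (κ / ρ t / s) := by field_simp
    _ ≤ 2 / κ * (ρ (s * t) / ρ t / s) := by
        gcongr
        exact hκ_le _ hst
    _ ≤ 2 / κ * (rbar ρ s / s) := by
        gcongr
        exact hρ.div_le_rbar hs ht

lemma IsClassBpm.exists_rbar_div_lt (hρ : IsClassBpm ρ) {c : ℝ} (hc : 0 < c) :
    ∃ s > 0, rbar ρ s / s < c := by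
  by_contra! h
  have hint : IntegrableOn (fun s ↦ c⁻¹ * (min 1 s⁻¹ * rbar ρ s * s⁻¹)) (Ioi 1) :=
    (hρ.integ.mono_set (Ioi_subset_Ioi zero_le_one)).const_mul c⁻¹
  refine not_integrableOn_Ioi_inv (hint.mono' (by fun_prop) ?_)
  filter_upwards [ae_restrict_mem measurableSet_Ioi] with s (hs : 1 < s)
  have hs0 : 0 < s := one_pos.trans hs
  rw [Real.norm_of_nonneg (by positivity), min_eq_right (inv_le_one_of_one_le₀ hs.le)]
  calc s⁻¹ = c⁻¹ * (c * s⁻¹) := by field_simp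
    _ ≤ c⁻¹ * (s⁻¹ * rbar ρ s * s⁻¹) := by
        gcongr
        rw [inv_mul_eq_div]
        exact h s hs0

lemma IsClassBpm.exists_zpow_lt_mul (hρ : IsClassBpm ρ) {η : ℝ} (hη : 0 < η) :
    ∃ n : ℤ, (2 : ℝ) ^ n < η * ρ (2 ^ n) := by
  obtain ⟨c, hc, hbound⟩ := hρ.exists_zpow_div_le_rbar_div
  obtain ⟨s, hs, hsη⟩ := hρ.exists_rbar_div_lt (div_pos hη hc)
  obtain ⟨n, hn⟩ := hbound s hs
  refine ⟨n, (div_lt_iff₀ (hρ.pos _ (by positivity))).1 (hn.trans_lt ?_)⟩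
  rwa [mul_comm, ← lt_div_iff₀ hc]

end FunctionParameter

section JNorm

variable {E₀ E₁ V : Type*} [NormedAddCommGroup E₀] [NormedSpace ℝ E₀]
  [NormedAddCommGroup E₁] [NormedSpace ℝ E₁] [AddCommGroup V] [Module ℝ V]
  {i₀ : E₀ →ₗ[ℝ] V} {i₁ : E₁ →ₗ[ℝ] V}

lemma enormOf_lt_ofReal_iff {x : V} {r : ℝ} :
    enormOf i₀ x < ENNReal.ofReal r ↔ ∃ a, i₀ a = x ∧ ‖a‖ < r := by
  simp only [enormOf, iInf_lt_iff, exists_prop, ← enorm_eq_nnnorm, ← ofReal_norm,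
    ENNReal.ofReal_lt_ofReal_iff_of_nonneg (norm_nonneg _)]

lemma enormOf_sub_le (i₀ : E₀ →ₗ[ℝ] V) (x y : V) :
    enormOf i₀ (x - y) ≤ enormOf i₀ x + enormOf i₀ y := by
  refine ENNReal.le_iInf₂_add_iInf₂ fun a ha b hb ↦ ?_
  refine iInf₂_le_of_le (a - b) (by rw [map_sub, ha, hb]) ?_
  exact_mod_cast nnnorm_sub_le a b

lemma esumNorm_zero (i₀ : E₀ →ₗ[ℝ] V) (i₁ : E₁ →ₗ[ℝ] V) : esumNorm i₀ i₁ 0 = 0 :=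
  le_antisymm (iInf_le_of_le 0 (iInf₂_le_of_le 0 (by simp) (by simp))) bot_le

lemma eLq_single {q : ℝ≥0∞} (hq : q ≠ 0) (n : ℤ) (r : ℝ≥0∞) : eLq q (Pi.single n r) = r := by
  unfold eLq
  split_ifs with hq_top
  · refine le_antisymm (iSup_le fun k ↦ ?_) (le_iSup_of_le n (by simp))
    obtain rfl | hk := eq_or_ne k n <;> simp [*]
  · have hq_pos : 0 < q.toReal := ENNReal.toReal_pos hq hq_top
    rw [tsum_eq_single n fun k hk ↦ by simp [hk, hq_pos], Pi.single_eq_same, one_div,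
      ENNReal.rpow_rpow_inv hq_pos.ne']

lemma isJRep_single (n : ℤ) {a : E₀} {b : E₁} (hab : i₀ a = i₁ b) :
    IsJRep i₀ i₁ (i₀ a) (Pi.single n a) (Pi.single n b) := by
  refine ⟨fun k ↦ ?_, fun ε hε ↦ ⟨{n}, fun G hG ↦ ?_⟩⟩
  · obtain rfl | hk := eq_or_ne k n <;> simp [*]
  · have hsum : ∑ k ∈ G, i₀ (Pi.single (M := fun _ ↦ E₀) n a k) = i₀ a := by
      rw [← map_sum, Finset.sum_pi_single', if_pos (Finset.singleton_subset_iff.1 hG)]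
    rwa [hsum, sub_self, esumNorm_zero, ENNReal.ofReal_pos]

lemma eJNorm_le_of_eq (ρ : ℝ → ℝ) {q : ℝ≥0∞} (hq : q ≠ 0) (n : ℤ) {a : E₀} {b : E₁}
    (hab : i₀ a = i₁ b) :
    eJNorm i₀ i₁ ρ q (i₀ a) ≤ ENNReal.ofReal (max ‖a‖ (2 ^ n * ‖b‖) / ρ (2 ^ n)) := by
  refine iInf_le_of_le _ (iInf₂_le_of_le _ (isJRep_single n hab) ?_)
  refine Eq.le (Eq.trans (congrArg (eLq q) (funext fun k ↦ ?_)) (eLq_single hq n _))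
  obtain rfl | hk := eq_or_ne k n <;> simp [*]

lemma exists_forall_eJNorm_lt_of_enormOf_lt {ρ : ℝ → ℝ}
    (hρ : ∀ η > 0, ∃ n : ℤ, (2 : ℝ) ^ n < η * ρ (2 ^ n)) {q : ℝ≥0∞} (hq : q ≠ 0)
    (i₀ : E₀ →ₗ[ℝ] V) (i₁ : E₁ →ₗ[ℝ] V) {M : ℝ≥0∞} (hM : M ≠ ∞) {ε : ℝ} (hε : 0 < ε) :
    ∃ δ > 0, ∀ x, enormOf i₀ x < ENNReal.ofReal δ → enormOf i₁ x ≤ M →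
      eJNorm i₀ i₁ ρ q x < ENNReal.ofReal ε := by
  obtain ⟨n, hn⟩ := hρ (ε / (M.toReal + 1)) (by positivity)
  have hρn : 0 < ρ (2 ^ n) :=
    pos_of_mul_pos_right ((by positivity : (0 : ℝ) < 2 ^ n).trans hn) (by positivity)
  refine ⟨ε * ρ (2 ^ n), by positivity, fun x hx₀ hx₁ ↦ ?_⟩
  have hx₁_lt : enormOf i₁ x < ENNReal.ofReal (M.toReal + 1) :=
    hx₁.trans_lt ((ENNReal.lt_ofReal_iff_toReal_lt hM).2 (lt_add_one _))
  obtain ⟨a, rfl, ha⟩ := enormOf_lt_ofReal_iff.1 hx₀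
  obtain ⟨b, hb, hbM⟩ := enormOf_lt_ofReal_iff.1 hx₁_lt
  refine (eJNorm_le_of_eq ρ hq n hb.symm).trans_lt ((ENNReal.ofReal_lt_ofReal_iff hε).2 ?_)
  rw [div_lt_iff₀ hρn, max_lt_iff]
  refine ⟨ha, ?_⟩
  calc (2 : ℝ) ^ n * ‖b‖ ≤ 2 ^ n * (M.toReal + 1) := by gcongr
    _ < ε / (M.toReal + 1) * ρ (2 ^ n) * (M.toReal + 1) := by gcongr
    _ = ε * ρ (2 ^ n) := by field_simp

end JNorm

section TotallyBounded

/-- Total boundedness of a set for an extended norm: finite `ε`-nets exist for every `ε > 0`. As in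
`eBilCompact`, the points of the net need not belong to the set. -/
def IsTotallyBoundedFor {V : Type*} [AddCommGroup V] (N : V → ℝ≥0∞) (S : Set V) : Prop :=
  ∀ ε : ℝ, 0 < ε → ∃ D : Finset V, ∀ x ∈ S, ∃ c ∈ D, N (x - c) < ENNReal.ofReal ε

lemma IsTotallyBoundedFor.exists_finset_subset {V : Type*} [AddCommGroup V] {N : V → ℝ≥0∞}
    {S : Set V} (hS : IsTotallyBoundedFor N S) (hN : ∀ x y, N (x - y) ≤ N x + N y) {ε : ℝ}
    (hε : 0 < ε) :
    ∃ D : Finset V, ↑D ⊆ S ∧ ∀ x ∈ S, ∃ c ∈ D, N (x - c) < ENNReal.ofReal ε := by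
  classical
  obtain ⟨D, hD⟩ := hS (ε / 2) (half_pos hε)
  let IsNear (c y : V) : Prop := y ∈ S ∧ N (y - c) < ENNReal.ofReal (ε / 2)
  have hchoice (c : V) : ∃ y, (∃ x, IsNear c x) → IsNear c y := by
    by_cases h : ∃ x, IsNear c x
    · exact h.imp fun _ hy _ ↦ hy
    · exact ⟨0, fun h' ↦ absurd h' h⟩
  choose f hf using hchoice
  refine ⟨({c ∈ D | ∃ x, IsNear c x}).image f, ?_, fun x hx ↦ ?_⟩
  · simp only [Finset.coe_image, image_subset_iff, Finset.coe_filter]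
    exact fun c hc ↦ (hf c hc.2).1
  · obtain ⟨c, hcD, hxc⟩ := hD x hx
    have hc : ∃ y, IsNear c y := ⟨x, hx, hxc⟩
    refine ⟨f c, Finset.mem_image_of_mem f (Finset.mem_filter.2 ⟨hcD, hc⟩), ?_⟩
    calc N (x - f c) = N (x - c - (f c - c)) := by rw [sub_sub_sub_cancel_right]
      _ ≤ N (x - c) + N (f c - c) := hN _ _
      _ < ENNReal.ofReal (ε / 2) + ENNReal.ofReal (ε / 2) := ENNReal.add_lt_add hxc (hf c hc).2
      _ = ENNReal.ofReal ε := by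
          rw [← ENNReal.ofReal_add (by positivity) (by positivity), add_halves]

lemma IsTotallyBoundedFor.of_enormOf {E₀ E₁ V : Type*} [NormedAddCommGroup E₀] [NormedSpace ℝ E₀]
    [NormedAddCommGroup E₁] [NormedSpace ℝ E₁] [AddCommGroup V] [Module ℝ V]
    {i₀ : E₀ →ₗ[ℝ] V} {i₁ : E₁ →ₗ[ℝ] V} {ρ : ℝ → ℝ}
    (hρ : ∀ η > 0, ∃ n : ℤ, (2 : ℝ) ^ n < η * ρ (2 ^ n)) {q : ℝ≥0∞} (hq : q ≠ 0)
    {N : V → ℝ≥0∞} (hN : ∃ C > 0, ∀ x, N x ≤ ENNReal.ofReal C * eJNorm i₀ i₁ ρ q x)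
    {S : Set V} (hS : IsTotallyBoundedFor (enormOf i₀) S)
    {M : ℝ≥0∞} (hM : M ≠ ∞) (hSM : ∀ x ∈ S, enormOf i₁ x ≤ M) :
    IsTotallyBoundedFor N S := by
  intro ε hε
  obtain ⟨C, hC, hNJ⟩ := hN
  obtain ⟨δ, hδ, hsmall⟩ := exists_forall_eJNorm_lt_of_enormOf_lt hρ hq i₀ i₁
    (ENNReal.add_ne_top.2 ⟨hM, hM⟩) (div_pos hε hC)
  obtain ⟨D, hDS, hD⟩ := hS.exists_finset_subset (enormOf_sub_le i₀) hδ
  refine ⟨D, fun x hx ↦ ?_⟩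
  obtain ⟨c, hcD, hxc⟩ := hD x hx
  refine ⟨c, hcD, ?_⟩
  have hxc₁ : enormOf i₁ (x - c) ≤ M + M :=
    (enormOf_sub_le i₁ x c).trans (add_le_add (hSM x hx) (hSM c (hDS hcD)))
  calc N (x - c) ≤ ENNReal.ofReal C * eJNorm i₀ i₁ ρ q (x - c) := hNJ _
    _ < ENNReal.ofReal C * ENNReal.ofReal (ε / C) :=
        ENNReal.mul_lt_mul_right (ENNReal.ofReal_pos.2 hC).ne' ENNReal.ofReal_ne_top
          (hsmall _ hxc hxc₁)
    _ = ENNReal.ofReal ε := by rw [← ENNReal.ofReal_mul hC.le, mul_div_cancel₀ _ hC.ne']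

end TotallyBounded

section Bilinear

variable {VE VF VG : Type*} {NE : VE → ℝ≥0∞} {NF : VF → ℝ≥0∞} {NG : VG → ℝ≥0∞} {T : VE → VF → VG}

lemma eBilCompact_iff_isTotallyBoundedFor [AddCommGroup VG] :
    eBilCompact NE NF NG T ↔
      IsTotallyBoundedFor NG (image2 T {x | NE x ≤ 1} {y | NF y ≤ 1}) := by
  simp only [eBilCompact, IsTotallyBoundedFor, forall_mem_image2, mem_ofPred_eq]
  exact forall₂_congr fun _ _ ↦ exists_congr fun _ ↦ forall_congr' fun _ ↦ forall_comm

lemma le_eBilNorm {x : VE} {y : VF} (hx : NE x ≤ 1) (hy : NF y ≤ 1) :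
    NG (T x y) ≤ eBilNorm NE NF NG T :=
  le_iSup₂_of_le x hx (le_iSup₂_of_le y hy le_rfl)

lemma eBilBdd.eBilNorm_ne_top (hT : eBilBdd NE NF NG T) : eBilNorm NE NF NG T ≠ ∞ := by
  obtain ⟨M, hM⟩ := hT
  refine ne_top_of_le_ne_top ENNReal.coe_ne_top (b := (M : ℝ≥0∞)) ?_
  refine iSup₂_le fun x hx ↦ iSup₂_le fun y hy ↦ ?_
  calc NG (T x y) ≤ M * NE x * NF y := hM x y
    _ ≤ M * 1 * 1 := by gcongr
    _ = M := by simp only [mul_one]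

theorem statement1_general {G₀ G₁ : Type*} [NormedAddCommGroup G₀] [NormedSpace ℝ G₀]
    [NormedAddCommGroup G₁] [NormedSpace ℝ G₁] [AddCommGroup VG] [Module ℝ VG]
    {i₀ : G₀ →ₗ[ℝ] VG} {i₁ : G₁ →ₗ[ℝ] VG} {ρ : ℝ → ℝ}
    (hρ : ∀ η > 0, ∃ n : ℤ, (2 : ℝ) ^ n < η * ρ (2 ^ n)) {q : ℝ≥0∞} (hq : q ≠ 0)
    (hNG : ∃ C > 0, ∀ x, NG x ≤ ENNReal.ofReal C * eJNorm i₀ i₁ ρ q x)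
    (hcpt : eBilCompact NE NF (enormOf i₀) T) (hbdd : eBilNorm NE NF (enormOf i₁) T ≠ ∞) :
    eBilCompact NE NF NG T := by
  rw [eBilCompact_iff_isTotallyBoundedFor] at hcpt ⊢
  exact hcpt.of_enormOf hρ hq hNG hbdd (forall_mem_image2.2 fun _ hx _ hy ↦ le_eBilNorm hx hy)

end Bilinear

/-- Lions–Peetre type, same departure spaces: if `T : E × F → G₀ + G₁`
is bounded bilinear with `T(E × F) ⊆ G₀ ∩ G₁`, compact into `G₀` and bounded into
`G₁`, and `G` is of class `J_ρ(G₀,G₁)` with `ρ ∈ ℬ^{+-}`, then `T` is compact from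
`E × F` into `G`. -/
theorem statement1 {E F G₀ G₁ VG : Type*}
    [NormedAddCommGroup E] [NormedSpace ℝ E] [CompleteSpace E]
    [NormedAddCommGroup F] [NormedSpace ℝ F] [CompleteSpace F]
    [NormedAddCommGroup G₀] [NormedSpace ℝ G₀] [NormedAddCommGroup G₁] [NormedSpace ℝ G₁]
    [AddCommGroup VG] [Module ℝ VG] [TopologicalSpace VG]
    (iG₀ : G₀ →ₗ[ℝ] VG) (iG₁ : G₁ →ₗ[ℝ] VG) (hG : IsBanachCouple iG₀ iG₁)
    (ρ : ℝ → ℝ) (hρ : IsClassBpm ρ)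
    (NG : VG → ℝ≥0∞) (hNG : IsClassJ iG₀ iG₁ ρ NG)
    (T : E →ₗ[ℝ] F →ₗ[ℝ] VG)
    (hbdd : eBilBdd (fun x : E => (‖x‖₊ : ℝ≥0∞)) (fun y : F => (‖y‖₊ : ℝ≥0∞))
      (esumNorm iG₀ iG₁) (fun x y => T x y))
    (hrange : ∀ (x : E) (y : F), einterNorm iG₀ iG₁ (T x y) ≠ ∞)
    (hcpt : eBilCompact (fun x : E => (‖x‖₊ : ℝ≥0∞)) (fun y : F => (‖y‖₊ : ℝ≥0∞))
      (enormOf iG₀) (fun x y => T x y))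
    (hbdd1 : eBilBdd (fun x : E => (‖x‖₊ : ℝ≥0∞)) (fun y : F => (‖y‖₊ : ℝ≥0∞))
      (enormOf iG₁) (fun x y => T x y)) :
    eBilCompact (fun x : E => (‖x‖₊ : ℝ≥0∞)) (fun y : F => (‖y‖₊ : ℝ≥0∞)) NG
      (fun x y => T x y) := by
  exact statement1_general (fun _ ↦ hρ.exists_zpow_lt_mul) one_ne_zero hNG.2 hcpt
    hbdd1.eBilNorm_ne_top
end

section
/- Let (E₀,E₁) and (F₀,F₁) be Banach couples, ρ a function parameter of class ℬ^{+−}, γ(t) = 1/ρ̄(t⁻¹), and let E and F be Banach spaces of class K_γ(E₀,E₁) and K_ρ(F₀,F₁) respectively; let G be any Banach space. If T is a bounded bilinear operator from (E₀+E₁)×(F₀+F₁) into G which is compact from E₀×F₀ into G, then T is compact from E×F into G. -/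
open Filter Set MeasureTheory ENNReal NNReal

/-!
Integrability of `min(1, 1/t) ρ̄(t)/t` forces `ρ(t)/t → 0` as `t → ∞`: with `k(u) = ρ̄(eᵘ)/eᵘ`,
submultiplicativity gives `ρ(eᵛ)/eᵛ ≤ k(u) k(v - u)` for `0 ≤ u ≤ v`, and the arithmetic-geometric
mean inequality integrated over `[0, v]` yields `v √(ρ(eᵛ)/eᵛ) ≤ ∫₀^∞ k`. Since `γ ≤ ρ`, also
`γ(t)/t → 0`.

Hence, for every `ε`, the unit ball of `E` lies in a multiple of the unit ball of `E₀` plus `ε`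
times the unit ball of `E₁`, and likewise for `F`. By boundedness of `T`, the set `T(B_E, B_F)`
is then uniformly close to a multiple of the totally bounded set `T(B_{E₀}, B_{F₀})`.
-/

open scoped Topology Pointwise

section Decay

variable {f k : ℝ → ℝ}

theorem mul_sqrt_le_setIntegral_of_le_mul (hk : IntegrableOn k (Ioi 0))
    (hk_nonneg : ∀ u, 0 ≤ u → 0 ≤ k u)
    (hfk : ∀ u v, 0 ≤ u → 0 ≤ v → f (u + v) ≤ k u * k v) {v : ℝ} (hv : 0 ≤ v) :
    v * √(f v) ≤ ∫ u in Ioi 0, k u := by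
  have hk_int : IntervalIntegrable k volume 0 v :=
    (intervalIntegrable_iff_integrableOn_Ioc_of_le hv).2 (hk.mono_set Ioc_subset_Ioi_self)
  have hk_refl : IntervalIntegrable (fun u => k (v - u)) volume 0 v := by
    simpa using (hk_int.comp_sub_left v).symm
  have h_amgm : ∀ u ∈ Icc 0 v, √(f v) ≤ (k u + k (v - u)) / 2 := by
    rintro u ⟨hu, huv⟩
    have hku := hk_nonneg u hu
    have hkvu := hk_nonneg (v - u) (sub_nonneg.2 huv)
    have hfv : f v ≤ k u * k (v - u) := by simpa using hfk u (v - u) hu (sub_nonneg.2 huv)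
    have h_sq : k u * k (v - u) ≤ ((k u + k (v - u)) / 2) ^ 2 := by
      linarith [four_mul_le_sq_add (k u) (k (v - u))]
    exact Real.sqrt_le_iff.2 ⟨by positivity, hfv.trans h_sq⟩
  calc v * √(f v) = ∫ _ in (0 : ℝ)..v, √(f v) := by simp
    _ ≤ ∫ u in (0 : ℝ)..v, (k u + k (v - u)) / 2 :=
        intervalIntegral.integral_mono_on hv intervalIntegrable_const
          ((hk_int.add hk_refl).div_const 2) h_amgm
    _ = ∫ u in (0 : ℝ)..v, k u := by
        rw [intervalIntegral.integral_div, intervalIntegral.integral_add hk_int hk_refl,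
          intervalIntegral.integral_comp_sub_left, sub_self, sub_zero, add_self_div_two]
    _ ≤ ∫ u in Ioi 0, k u := by
        rw [intervalIntegral.integral_of_le hv]
        exact setIntegral_mono_set hk
          (ae_restrict_of_forall_mem measurableSet_Ioi fun u hu => hk_nonneg u (le_of_lt hu))
          Ioc_subset_Ioi_self.eventuallyLE

theorem tendsto_zero_of_le_mul_of_integrableOn (hk : IntegrableOn k (Ioi 0))
    (hk_nonneg : ∀ u, 0 ≤ u → 0 ≤ k u) (hf_nonneg : ∀ u, 0 ≤ u → 0 ≤ f u)
    (hfk : ∀ u v, 0 ≤ u → 0 ≤ v → f (u + v) ≤ k u * k v) :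
    Tendsto f atTop (𝓝 0) := by
  have h_sqrt : Tendsto (fun v => √(f v)) atTop (𝓝 0) := by
    refine squeeze_zero' (Eventually.of_forall fun v => Real.sqrt_nonneg _) ?_
      (tendsto_id.const_div_atTop (∫ u in Ioi 0, k u))
    filter_upwards [eventually_gt_atTop 0] with v hv
    exact (le_div_iff₀' hv).2 (mul_sqrt_le_setIntegral_of_le_mul hk hk_nonneg hfk hv.le)
  have h_sq : Tendsto (fun v => √(f v) ^ 2) atTop (𝓝 0) := by simpa using h_sqrt.pow 2
  refine h_sq.congr' ?_
  filter_upwards [eventually_ge_atTop 0] with v hv using Real.sq_sqrt (hf_nonneg v hv)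

end Decay

section FunctionParameter

variable {ρ : ℝ → ℝ} {s t : ℝ}

namespace IsClassB

theorem le_rbar_mul (h : IsClassB ρ) (hs : 0 < s) (ht : 0 < t) : ρ (s * t) ≤ rbar ρ s * ρ t :=
  (div_le_iff₀ (h.pos t ht)).1 (le_csSup (h.bdd s hs) ⟨t, ht, rfl⟩)

theorem le_rbar (h : IsClassB ρ) (hs : 0 < s) : ρ s ≤ rbar ρ s := by
  simpa [h.one] using h.le_rbar_mul hs one_pos

theorem rbar_pos (h : IsClassB ρ) (hs : 0 < s) : 0 < rbar ρ s :=
  (h.pos s hs).trans_le (h.le_rbar hs)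

theorem inv_rbar_inv_le (h : IsClassB ρ) (ht : 0 < t) : (rbar ρ t⁻¹)⁻¹ ≤ ρ t := by
  have h_one_le : 1 ≤ rbar ρ t⁻¹ * ρ t := by
    simpa [inv_mul_cancel₀ ht.ne', h.one] using h.le_rbar_mul (inv_pos.2 ht) ht
  exact (inv_le_iff_one_le_mul₀' (h.rbar_pos (inv_pos.2 ht))).2 h_one_le

theorem div_mul_le_rbar_div_mul_rbar_div (h : IsClassB ρ) (hs : 0 < s) (ht : 0 < t) :
    ρ (s * t) / (s * t) ≤ rbar ρ s / s * (rbar ρ t / t) := by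
  have hst : ρ (s * t) ≤ rbar ρ s * rbar ρ t :=
    (h.le_rbar_mul hs ht).trans (mul_le_mul_of_nonneg_left (h.le_rbar ht) (h.rbar_pos hs).le)
  rw [div_mul_div_comm]
  gcongr

end IsClassB

namespace IsClassBpm

theorem integrableOn_rbar_exp_div_exp (h : IsClassBpm ρ) :
    IntegrableOn (fun u => rbar ρ (Real.exp u) / Real.exp u) (Ioi 0) := by
  have h_Ioi_one : IntegrableOn (fun t => min 1 t⁻¹ * rbar ρ t * t⁻¹) (Real.exp '' Ioi 0) :=
    h.integ.mono_set (by rw [Real.image_exp_Ioi]; exact Ioi_subset_Ioi (Real.exp_pos 0).le)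
  rw [integrableOn_image_iff_integrableOn_deriv_smul_of_monotoneOn measurableSet_Ioi
    (fun u _ => (Real.hasDerivAt_exp u).hasDerivWithinAt) (Real.exp_monotone.monotoneOn _)]
    at h_Ioi_one
  refine h_Ioi_one.congr_fun (fun u hu => ?_) measurableSet_Ioi
  have h_min : min 1 (Real.exp u)⁻¹ = (Real.exp u)⁻¹ :=
    min_eq_right (inv_le_one_of_one_le₀ (Real.one_le_exp (le_of_lt hu)))
  simp only [h_min, smul_eq_mul]
  field_simp

theorem tendsto_div_atTop (h : IsClassBpm ρ) : Tendsto (fun t => ρ t / t) atTop (𝓝 0) := by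
  have hB := h.toIsClassB
  have h_exp : Tendsto (fun u => ρ (Real.exp u) / Real.exp u) atTop (𝓝 0) :=
    tendsto_zero_of_le_mul_of_integrableOn h.integrableOn_rbar_exp_div_exp
      (fun u _ => (div_pos (hB.rbar_pos (Real.exp_pos u)) (Real.exp_pos u)).le)
      (fun u _ => (div_pos (hB.pos _ (Real.exp_pos u)) (Real.exp_pos u)).le)
      (fun u v _ _ => by
        simpa only [Real.exp_add] using
          hB.div_mul_le_rbar_div_mul_rbar_div (Real.exp_pos u) (Real.exp_pos v))
  refine (h_exp.comp Real.tendsto_log_atTop).congr' ?_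
  filter_upwards [eventually_gt_atTop 0] with t ht
  simp only [Function.comp_apply, Real.exp_log ht]

theorem tendsto_inv_rbar_inv_div_atTop (h : IsClassBpm ρ) :
    Tendsto (fun t => (rbar ρ t⁻¹)⁻¹ / t) atTop (𝓝 0) := by
  have hB := h.toIsClassB
  refine squeeze_zero' ?_ ?_ h.tendsto_div_atTop
  · filter_upwards [eventually_gt_atTop 0] with t ht
    exact div_nonneg (inv_nonneg.2 (hB.rbar_pos (inv_pos.2 ht)).le) ht.le
  · filter_upwards [eventually_gt_atTop 0] with t ht
    exact div_le_div_of_nonneg_right (hB.inv_rbar_inv_le ht) ht.le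

end IsClassBpm

end FunctionParameter

section Couple

variable {E₀ E₁ V : Type*} [NormedAddCommGroup E₀] [NormedSpace ℝ E₀]
  [NormedAddCommGroup E₁] [NormedSpace ℝ E₁] [AddCommGroup V] [Module ℝ V]
  {i₀ : E₀ →ₗ[ℝ] V} {i₁ : E₁ →ₗ[ℝ] V}

/-- The unit ball of `N` is almost absorbed by `E₀`: for every `ε > 0` it is contained in
`R B_{E₀} + ε B_{E₁}` for some `R`. Equivalently, `K(t, ·)/t → 0` as `t → ∞`, uniformly on the
unit ball of `N`. -/
def IsAlmostAbsorbed (i₀ : E₀ →ₗ[ℝ] V) (i₁ : E₁ →ₗ[ℝ] V) (N : V → ℝ≥0∞) : Prop :=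
  ∀ ε : ℝ, 0 < ε → ∃ R : ℝ, 0 < R ∧ ∀ x, N x ≤ 1 →
    ∃ (a : E₀) (b : E₁), x = i₀ a + i₁ b ∧ ‖a‖ ≤ R ∧ ‖b‖ ≤ ε

theorem exists_decomp_of_eKfun_lt {t r : ℝ} (ht : 0 ≤ t) {x : V}
    (hx : eKfun i₀ i₁ t x < ENNReal.ofReal r) :
    ∃ (a : E₀) (b : E₁), x = i₀ a + i₁ b ∧ ‖a‖ + t * ‖b‖ < r := by
  simp only [eKfun, iInf_lt_iff] at hx
  obtain ⟨a, b, hab, hlt⟩ := hx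
  exact ⟨a, b, hab, (ENNReal.ofReal_lt_ofReal_iff_of_nonneg (by positivity)).1 hlt⟩

theorem eKfun_two_zpow_le_of_eKNorm_top_le {σ : ℝ → ℝ} {C : ℝ≥0∞} (hC : C ≠ ∞) {x : V}
    (hx : eKNorm i₀ i₁ σ ⊤ x ≤ C) (n : ℤ) :
    eKfun i₀ i₁ (2 ^ n) x ≤ C * ENNReal.ofReal (σ (2 ^ n)) := by
  rw [eKNorm, eLq, if_pos rfl] at hx
  exact (ENNReal.div_le_iff_le_mul (.inr hC) (.inl ENNReal.ofReal_ne_top)).1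
    ((le_iSup_iff.2 fun _ h => h n).trans hx)

theorem isAlmostAbsorbed_of_eKNorm_top_le {σ : ℝ → ℝ} (hσ : Tendsto (fun t => σ t / t) atTop (𝓝 0))
    {N : V → ℝ≥0∞} (hN : ∃ C > 0, ∀ x, eKNorm i₀ i₁ σ ⊤ x ≤ ENNReal.ofReal C * N x) :
    IsAlmostAbsorbed i₀ i₁ N := by
  obtain ⟨C, hC, hN⟩ := hN
  intro ε hε
  obtain ⟨n, hn⟩ : ∃ n : ℕ, σ (2 ^ n) / 2 ^ n < ε / C :=
    ((hσ.comp (tendsto_pow_atTop_atTop_of_one_lt one_lt_two)).eventually_lt_const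
      (div_pos hε hC)).exists
  have hpow : (0 : ℝ) < 2 ^ n := by positivity
  have hCσ : C * σ (2 ^ n) < ε * 2 ^ n := by
    rwa [div_lt_div_iff₀ hpow hC, mul_comm (σ _)] at hn
  refine ⟨ε * 2 ^ n, by positivity, fun x hx => ?_⟩
  have hxC : eKNorm i₀ i₁ σ ⊤ x ≤ ENNReal.ofReal C :=
    (hN x).trans (mul_le_of_le_one_right' hx)
  have hK : eKfun i₀ i₁ (2 ^ n) x < ENNReal.ofReal (ε * 2 ^ n) :=
    calc eKfun i₀ i₁ (2 ^ n) x ≤ ENNReal.ofReal C * ENNReal.ofReal (σ (2 ^ n)) := by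
          simpa only [zpow_natCast] using
            eKfun_two_zpow_le_of_eKNorm_top_le ENNReal.ofReal_ne_top hxC n
      _ = ENNReal.ofReal (C * σ (2 ^ n)) := (ENNReal.ofReal_mul hC.le).symm
      _ < ENNReal.ofReal (ε * 2 ^ n) := (ENNReal.ofReal_lt_ofReal_iff (by positivity)).2 hCσ
  obtain ⟨a, b, hab, hlt⟩ := exists_decomp_of_eKfun_lt hpow.le hK
  refine ⟨a, b, hab, ?_, le_of_mul_le_mul_left (a := 2 ^ n) ?_ hpow⟩
  · linarith [mul_nonneg hpow.le (norm_nonneg b)]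
  · linarith [norm_nonneg a]

theorem esumNorm_add_le (a : E₀) (b : E₁) :
    esumNorm i₀ i₁ (i₀ a + i₁ b) ≤ ENNReal.ofReal (‖a‖ + ‖b‖) :=
  iInf_le_of_le a (iInf_le_of_le b (iInf_le_of_le rfl (by rw [one_mul])))

theorem esumNorm_left_le (a : E₀) : esumNorm i₀ i₁ (i₀ a) ≤ ENNReal.ofReal ‖a‖ := by
  simpa using esumNorm_add_le (i₀ := i₀) (i₁ := i₁) a 0

theorem esumNorm_right_le (b : E₁) : esumNorm i₀ i₁ (i₁ b) ≤ ENNReal.ofReal ‖b‖ := by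
  simpa using esumNorm_add_le (i₀ := i₀) (i₁ := i₁) 0 b

theorem IsAlmostAbsorbed.exists_esumNorm_le {N : V → ℝ≥0∞} (hN : IsAlmostAbsorbed i₀ i₁ N) :
    ∃ r : ℝ, 0 ≤ r ∧ ∀ x, N x ≤ 1 → esumNorm i₀ i₁ x ≤ ENNReal.ofReal r := by
  obtain ⟨R, hR, hdecomp⟩ := hN 1 one_pos
  refine ⟨R + 1, by positivity, fun x hx => ?_⟩
  obtain ⟨a, b, rfl, ha, hb⟩ := hdecomp x hx
  exact (esumNorm_add_le a b).trans (ENNReal.ofReal_le_ofReal (add_le_add ha hb))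

theorem enormOf_apply_le (a : E₀) : enormOf i₀ (i₀ a) ≤ ‖a‖₊ :=
  iInf_le_of_le a (iInf_le _ rfl)

theorem mem_smul_enormOf_le_one {R : ℝ} (hR : 0 < R) {a : E₀} (ha : ‖a‖ ≤ R) :
    i₀ a ∈ R • {x | enormOf i₀ x ≤ 1} := by
  have h_norm : ‖R⁻¹ • a‖ ≤ 1 := by
    rw [norm_smul, Real.norm_of_nonneg (inv_nonneg.2 hR.le)]
    exact inv_mul_le_one_of_le₀ ha hR.le
  rw [mem_smul_set_iff_inv_smul_mem₀ hR.ne', ← map_smul]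
  exact (enormOf_apply_le _).trans (by exact_mod_cast h_norm)

end Couple

section TotallyBounded

theorem totallyBounded_of_forall_subset_thickening {α : Type*} [PseudoMetricSpace α] {s : Set α}
    (h : ∀ ε > 0, ∃ t, TotallyBounded t ∧ s ⊆ Metric.thickening ε t) : TotallyBounded s := by
  refine Metric.totallyBounded_iff.2 fun ε hε => ?_
  obtain ⟨t, ht, hst⟩ := h (ε / 2) (half_pos hε)
  obtain ⟨D, hD, htD⟩ := Metric.totallyBounded_iff.1 ht (ε / 2) (half_pos hε)
  refine ⟨D, hD, fun x hx => ?_⟩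
  obtain ⟨y, hy, hxy⟩ := Metric.mem_thickening_iff.1 (hst hx)
  obtain ⟨c, hc, hyc⟩ := mem_iUnion₂.1 (htD hy)
  have hxc : dist x c < ε := by linarith [dist_triangle x y c, Metric.mem_ball.1 hyc]
  exact mem_biUnion hc hxc

theorem totallyBounded_image2_smul_smul {𝕜 V W G : Type*} [NormedField 𝕜]
    [AddCommGroup V] [Module 𝕜 V] [AddCommGroup W] [Module 𝕜 W]
    [SeminormedAddCommGroup G] [NormedSpace 𝕜 G] (T : V →ₗ[𝕜] W →ₗ[𝕜] G) {A : Set V} {B : Set W}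
    (h : TotallyBounded (image2 (fun x y => T x y) A B)) (r s : 𝕜) :
    TotallyBounded (image2 (fun x y => T x y) (r • A) (s • B)) := by
  refine (h.image (uniformContinuous_const_smul (r * s))).subset ?_
  rintro _ ⟨_, ⟨x, hx, rfl⟩, _, ⟨y, hy, rfl⟩, rfl⟩
  exact ⟨T x y, mem_image2_of_mem hx hy, by simp [smul_smul, mul_comm]⟩

end TotallyBounded

section Bilinear

variable {VE VF G : Type*} [SeminormedAddCommGroup G] {NE : VE → ℝ≥0∞} {NF : VF → ℝ≥0∞}

theorem eBilCompact_iff_totallyBounded {f : VE → VF → G} :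
    eBilCompact NE NF (fun z : G => (‖z‖₊ : ℝ≥0∞)) f ↔
      TotallyBounded (image2 f {x | NE x ≤ 1} {y | NF y ≤ 1}) := by
  have h_ball {ε : ℝ} {z c : G} : (‖z - c‖₊ : ℝ≥0∞) < ENNReal.ofReal ε ↔ z ∈ Metric.ball c ε := by
    rw [Metric.mem_ball, ← edist_lt_ofReal, edist_eq_enorm_sub, enorm_eq_nnnorm]
  simp only [eBilCompact, h_ball, Metric.totallyBounded_iff, image2_subset_iff, mem_iUnion₂,
    mem_ofPred_eq, exists_prop]
  refine forall₂_congr fun ε _ => ⟨fun ⟨D, hD⟩ => ?_, fun ⟨D, hD_fin, hD⟩ => ?_⟩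
  · exact ⟨D, D.finite_toSet, fun x hx y hy => hD x y hx hy⟩
  · exact ⟨hD_fin.toFinset, fun x y hx hy => by simpa using hD x hx y hy⟩

theorem eBilBdd.exists_norm_le {f : VE → VF → G}
    (hf : eBilBdd NE NF (fun z : G => (‖z‖₊ : ℝ≥0∞)) f) :
    ∃ M : ℝ, ∀ x y (r s : ℝ), 0 ≤ r → 0 ≤ s → NE x ≤ ENNReal.ofReal r →
      NF y ≤ ENNReal.ofReal s → ‖f x y‖ ≤ M * r * s := by
  obtain ⟨M, hM⟩ := hf
  refine ⟨M, fun x y r s hr hs hx hy => ?_⟩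
  lift r to ℝ≥0 using hr
  lift s to ℝ≥0 using hs
  rw [ENNReal.ofReal_coe_nnreal] at hx hy
  have h_enorm : (‖f x y‖₊ : ℝ≥0∞) ≤ M * r * s := (hM x y).trans (by gcongr)
  exact_mod_cast h_enorm

end Bilinear

section Compactness

variable {E₀ E₁ F₀ F₁ VE VF G : Type*}
  [NormedAddCommGroup E₀] [NormedSpace ℝ E₀] [NormedAddCommGroup E₁] [NormedSpace ℝ E₁]
  [NormedAddCommGroup F₀] [NormedSpace ℝ F₀] [NormedAddCommGroup F₁] [NormedSpace ℝ F₁]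
  [AddCommGroup VE] [Module ℝ VE] [AddCommGroup VF] [Module ℝ VF]
  [NormedAddCommGroup G] [NormedSpace ℝ G]
  {iE₀ : E₀ →ₗ[ℝ] VE} {iE₁ : E₁ →ₗ[ℝ] VE} {iF₀ : F₀ →ₗ[ℝ] VF} {iF₁ : F₁ →ₗ[ℝ] VF}
  {NE : VE → ℝ≥0∞} {NF : VF → ℝ≥0∞} {T : VE →ₗ[ℝ] VF →ₗ[ℝ] G}

theorem exists_norm_bilin_sub_lt (hNE : IsAlmostAbsorbed iE₀ iE₁ NE)
    (hNF : IsAlmostAbsorbed iF₀ iF₁ NF)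
    (hbdd : eBilBdd (esumNorm iE₀ iE₁) (esumNorm iF₀ iF₁) (fun z : G => (‖z‖₊ : ℝ≥0∞))
      (fun x y => T x y)) {ε : ℝ} (hε : 0 < ε) :
    ∃ R > 0, ∃ S > 0, ∀ x y, NE x ≤ 1 → NF y ≤ 1 →
      ∃ (a : E₀) (c : F₀), ‖a‖ ≤ R ∧ ‖c‖ ≤ S ∧ ‖T x y - T (iE₀ a) (iF₀ c)‖ < ε := by
  obtain ⟨M, hT⟩ := hbdd.exists_norm_le
  obtain ⟨s, hs, hNFs⟩ := hNF.exists_esumNorm_le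
  obtain ⟨δ, hδ, hδε⟩ := exists_pos_mul_lt (half_pos hε) (M * s)
  obtain ⟨R, hR, hdecompE⟩ := hNE δ hδ
  -- The tolerance in `F₁` is chosen after `R`, because the cross term is of size `M * R * η`.
  obtain ⟨η, hη, hηε⟩ := exists_pos_mul_lt (half_pos hε) (M * R)
  obtain ⟨S, hS, hdecompF⟩ := hNF η hη
  refine ⟨R, hR, S, hS, fun x y hx hy => ?_⟩
  obtain ⟨a, b, hxab, ha, hb⟩ := hdecompE x hx
  obtain ⟨c, d, hycd, hc, hd⟩ := hdecompF y hy
  refine ⟨a, c, ha, hc, ?_⟩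
  have h_split : T x y - T (iE₀ a) (iF₀ c) = T (iE₁ b) y + T (iE₀ a) (iF₁ d) := by
    simp only [hxab, hycd, map_add, LinearMap.add_apply]
    abel
  have h_left : ‖T (iE₁ b) y‖ ≤ M * δ * s :=
    hT _ _ _ _ hδ.le hs ((esumNorm_right_le b).trans (ENNReal.ofReal_le_ofReal hb)) (hNFs y hy)
  have h_right : ‖T (iE₀ a) (iF₁ d)‖ ≤ M * R * η :=
    hT _ _ _ _ hR.le hη.le ((esumNorm_left_le a).trans (ENNReal.ofReal_le_ofReal ha))
      ((esumNorm_right_le d).trans (ENNReal.ofReal_le_ofReal hd))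
  calc ‖T x y - T (iE₀ a) (iF₀ c)‖ ≤ ‖T (iE₁ b) y‖ + ‖T (iE₀ a) (iF₁ d)‖ :=
        h_split ▸ norm_add_le _ _
    _ < ε := by linarith

theorem statement4_general (hNE : IsAlmostAbsorbed iE₀ iE₁ NE) (hNF : IsAlmostAbsorbed iF₀ iF₁ NF)
    (hbdd : eBilBdd (esumNorm iE₀ iE₁) (esumNorm iF₀ iF₁) (fun z : G => (‖z‖₊ : ℝ≥0∞))
      (fun x y => T x y))
    (hcpt : eBilCompact (enormOf iE₀) (enormOf iF₀) (fun z : G => (‖z‖₊ : ℝ≥0∞))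
      (fun x y => T x y)) :
    eBilCompact NE NF (fun z : G => (‖z‖₊ : ℝ≥0∞)) (fun x y => T x y) := by
  rw [eBilCompact_iff_totallyBounded] at hcpt ⊢
  refine totallyBounded_of_forall_subset_thickening fun ε hε => ?_
  obtain ⟨R, hR, S, hS, happrox⟩ := exists_norm_bilin_sub_lt hNE hNF hbdd hε
  refine ⟨_, totallyBounded_image2_smul_smul T hcpt R S, ?_⟩
  rintro _ ⟨x, hx, y, hy, rfl⟩
  obtain ⟨a, c, ha, hc, hdist⟩ := happrox x y hx hy
  exact Metric.mem_thickening_iff.2 ⟨T (iE₀ a) (iF₀ c),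
    mem_image2_of_mem (mem_smul_enormOf_le_one hR ha) (mem_smul_enormOf_le_one hS hc),
    (dist_eq_norm _ _).trans_lt hdist⟩

end Compactness

/-- Lions–Peetre type, same arriving space: if `E` is of class
`K_γ(E₀,E₁)` and `F` of class `K_ρ(F₀,F₁)` with `ρ ∈ ℬ^{+-}`, `γ(t) = 1/ρ̄(t⁻¹)`,
and `T : (E₀+E₁) × (F₀+F₁) → G` is bounded bilinear and compact from `E₀ × F₀` into
`G`, then `T` is compact from `E × F` into `G`. -/
theorem statement4 {E₀ E₁ F₀ F₁ VE VF G : Type*}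
    [NormedAddCommGroup E₀] [NormedSpace ℝ E₀] [NormedAddCommGroup E₁] [NormedSpace ℝ E₁]
    [NormedAddCommGroup F₀] [NormedSpace ℝ F₀] [NormedAddCommGroup F₁] [NormedSpace ℝ F₁]
    [AddCommGroup VE] [Module ℝ VE] [TopologicalSpace VE]
    [AddCommGroup VF] [Module ℝ VF] [TopologicalSpace VF]
    [NormedAddCommGroup G] [NormedSpace ℝ G] [CompleteSpace G]
    (iE₀ : E₀ →ₗ[ℝ] VE) (iE₁ : E₁ →ₗ[ℝ] VE) (hE : IsBanachCouple iE₀ iE₁)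
    (iF₀ : F₀ →ₗ[ℝ] VF) (iF₁ : F₁ →ₗ[ℝ] VF) (hF : IsBanachCouple iF₀ iF₁)
    (ρ : ℝ → ℝ) (hρ : IsClassBpm ρ)
    (NE : VE → ℝ≥0∞) (hNE : IsClassK iE₀ iE₁ (fun t => (rbar ρ t⁻¹)⁻¹) NE)
    (NF : VF → ℝ≥0∞) (hNF : IsClassK iF₀ iF₁ ρ NF)
    (T : VE →ₗ[ℝ] VF →ₗ[ℝ] G)
    (hbdd : eBilBdd (esumNorm iE₀ iE₁) (esumNorm iF₀ iF₁) (fun z : G => (‖z‖₊ : ℝ≥0∞))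
      (fun x y => T x y))
    (hcpt : eBilCompact (enormOf iE₀) (enormOf iF₀) (fun z : G => (‖z‖₊ : ℝ≥0∞))
      (fun x y => T x y)) :
    eBilCompact NE NF (fun z : G => (‖z‖₊ : ℝ≥0∞)) (fun x y => T x y) :=
  statement4_general (isAlmostAbsorbed_of_eKNorm_top_le hρ.tendsto_inv_rbar_inv_div_atTop hNE.2)
    (isAlmostAbsorbed_of_eKNorm_top_le hρ.tendsto_div_atTop hNF.2) hbdd hcpt
end
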